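/- arXiv:2601.02546 — 10 statements merged into one kernel-verified Lean document; each statement's English description precedes it below -/
import Mathlib

section
/- The multiplication defined on P₃ = ℤ⁶ × 𝔽₂¹¹ by the explicit coordinate formulas is associative: for all ᾱ, β̄, γ̄ ∈ P₃, (ᾱ·β̄)·γ̄ = ᾱ·(β̄·γ̄). -/
/-- `P₃ = ℤ⁶ × 𝔽₂¹¹`, with coordinates `a1,…,a6 : ℤ` and `a7,…,a17 : 𝔽₂`. -/
structure P3 where
  a1 : ℤ
  a2 : ℤ
  a3 : ℤ
  a4 : ℤ
  a5 : ℤ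
  a6 : ℤ
  a7 : ZMod 2
  a8 : ZMod 2
  a9 : ZMod 2
  a10 : ZMod 2
  a11 : ZMod 2
  a12 : ZMod 2
  a13 : ZMod 2
  a14 : ZMod 2
  a15 : ZMod 2
  a16 : ZMod 2
  a17 : ZMod 2

namespace P3

/-- Reduction of an integer coordinate modulo 2. -/
def r (x : ℤ) : ZMod 2 := (x : ZMod 2)

/-- The explicit multiplication on `P₃`. -/
def mul (α β : P3) : P3 where
  a1 := α.a1 + β.a1
  a2 := α.a2 + β.a2
  a3 := α.a3 + β.a3
  a4 := α.a4 + β.a4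
  a5 := α.a5 + β.a5
  a6 := α.a6 + β.a6
  a7 := α.a7 + β.a7 + r α.a2 * r β.a1
  a8 := α.a8 + β.a8 + r α.a3 * r β.a1
  a9 := α.a9 + β.a9 + r α.a3 * r β.a2
  a10 := α.a10 + β.a10 + r α.a5 * r β.a4
  a11 := α.a11 + β.a11 + r α.a6 * r β.a4
  a12 := α.a12 + β.a12 + r α.a6 * r β.a5
  a13 := α.a13 + β.a13 + r α.a4 * r β.a2 + r α.a5 * r β.a1
  a14 := α.a14 + β.a14 + r α.a4 * r β.a3 + r α.a6 * r β.a1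
  a15 := α.a15 + β.a15 + r α.a5 * r β.a3 + r α.a6 * r β.a2
  a16 := α.a16 + β.a16 + α.a13 * r β.a3 + α.a14 * r β.a2 + α.a15 * r β.a1
    + r α.a4 * r β.a2 * r β.a3 + r α.a5 * r β.a1 * r β.a3 + r α.a6 * r β.a1 * r β.a2
  a17 := α.a17 + β.a17 + α.a13 * r β.a6 + α.a14 * r β.a5 + α.a15 * r β.a4
    + r α.a4 * r α.a5 * r β.a3 + r α.a4 * r α.a6 * r β.a2 + r α.a5 * r α.a6 * r β.a1
    + r α.a4 * (r β.a2 * r β.a6 + r β.a5 * r β.a3)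
    + r α.a5 * (r β.a1 * r β.a6 + r β.a4 * r β.a3)
    + r α.a6 * (r β.a1 * r β.a5 + r β.a4 * r β.a2)

/-- The zero tuple. -/
def zero : P3 := ⟨0, 0, 0, 0, 0, 0, 0, 0, 0, 0, 0, 0, 0, 0, 0, 0, 0⟩

/-- The explicit inverse on `P₃`. -/
def inv (α : P3) : P3 where
  a1 := -α.a1
  a2 := -α.a2
  a3 := -α.a3
  a4 := -α.a4
  a5 := -α.a5
  a6 := -α.a6
  a7 := α.a7 + r α.a1 * r α.a2
  a8 := α.a8 + r α.a1 * r α.a3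
  a9 := α.a9 + r α.a2 * r α.a3
  a10 := α.a10 + r α.a4 * r α.a5
  a11 := α.a11 + r α.a4 * r α.a6
  a12 := α.a12 + r α.a5 * r α.a6
  a13 := α.a13 + r α.a2 * r α.a4 + r α.a1 * r α.a5
  a14 := α.a14 + r α.a3 * r α.a4 + r α.a1 * r α.a6
  a15 := α.a15 + r α.a3 * r α.a5 + r α.a2 * r α.a6
  a16 := α.a16 + α.a13 * r α.a3 + α.a14 * r α.a2 + α.a15 * r α.a1
    + r α.a4 * r α.a2 * r α.a3 + r α.a5 * r α.a1 * r α.a3 + r α.a6 * r α.a1 * r α.a2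
  a17 := α.a17 + α.a13 * r α.a6 + α.a14 * r α.a5 + α.a15 * r α.a4
    + r α.a4 * r α.a5 * r α.a3 + r α.a4 * r α.a6 * r α.a2 + r α.a5 * r α.a6 * r α.a1
    + r α.a4 * (r α.a2 * r α.a6 + r α.a5 * r α.a3)
    + r α.a5 * (r α.a1 * r α.a6 + r α.a4 * r α.a3)
    + r α.a6 * (r α.a1 * r α.a5 + r α.a4 * r α.a2)

/-- The map `σ : P₃ → P₃`. -/
def sigma (α : P3) : P3 where
  a1 := α.a4
  a2 := α.a5
  a3 := α.a6
  a4 := α.a1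
  a5 := α.a2
  a6 := α.a3
  a7 := α.a10
  a8 := α.a11
  a9 := α.a12
  a10 := α.a7
  a11 := α.a8
  a12 := α.a9
  a13 := α.a13 + r α.a1 * r α.a5 + r α.a2 * r α.a4
  a14 := α.a14 + r α.a1 * r α.a6 + r α.a3 * r α.a4
  a15 := α.a15 + r α.a2 * r α.a6 + r α.a3 * r α.a5
  a16 := α.a17 + r α.a1 * r α.a5 * r α.a6 + r α.a2 * r α.a4 * r α.a6 + r α.a3 * r α.a4 * r α.a5
  a17 := α.a16 + r α.a1 * r α.a2 * r α.a6 + r α.a1 * r α.a3 * r α.a5 + r α.a2 * r α.a3 * r α.a4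

/-- The map `τ : P₃ → P₃`. -/
def tau (α : P3) : P3 where
  a1 := α.a1 - α.a4
  a2 := α.a2 - α.a5
  a3 := α.a3 - α.a6
  a4 := -α.a4
  a5 := -α.a5
  a6 := -α.a6
  a7 := α.a7 + α.a10 + α.a13 + r α.a2 * r α.a4
  a8 := α.a8 + α.a11 + α.a14 + r α.a3 * r α.a4
  a9 := α.a9 + α.a12 + α.a15 + r α.a3 * r α.a5
  a10 := α.a10
  a11 := α.a11
  a12 := α.a12
  a13 := α.a13 + r α.a4 * r α.a5
  a14 := α.a14 + r α.a4 * r α.a6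
  a15 := α.a15 + r α.a5 * r α.a6
  a16 := α.a16 + α.a17 + r α.a4 * r α.a5 * r α.a6
  a17 := α.a17

/-- The map `ρ := σ ∘ τ`. -/
def rho : P3 → P3 := sigma ∘ tau

end P3

/-- the explicit multiplication on `P₃ = ℤ⁶ × 𝔽₂¹¹` is associative. -/
theorem P3_mul_assoc (α β γ : P3) :
    P3.mul (P3.mul α β) γ = P3.mul α (P3.mul β γ) := by
  have hr : ∀ x y : ℤ, P3.r (x + y) = P3.r x + P3.r y := fun x y => by
    simp [P3.r]
  simp only [P3.mul, P3.mk.injEq, hr]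
  refine ⟨?_, ?_, ?_, ?_, ?_, ?_, ?_, ?_, ?_, ?_, ?_, ?_, ?_, ?_, ?_, ?_, ?_⟩ <;> ring
end

section
/- With the explicit multiplication on P₃, the zero tuple 0 is a two-sided identity (0·ᾱ = ᾱ·0 = ᾱ for all ᾱ), and every ᾱ ∈ P₃ has the two-sided inverse β̄ given by: βᵢ = −αᵢ for i = 1,…,6; β₇ = α₇+α₁α₂; β₈ = α₈+α₁α₃; β₉ = α₉+α₂α₃; β₁₀ = α₁₀+α₄α₅; β₁₁ = α₁₁+α₄α₆; β₁₂ = α₁₂+α₅α₆; β₁₃ = α₁₃+α₂α₄+α₁α₅; β₁₄ = α₁₄+α₃α₄+α₁α₆; β₁₅ = α₁₅+α₃α₅+α₂α₆; β₁₆ = α₁₆+α₁₃α₃+α₁₄α₂+α₁₅α₁+α₄α₂α₃+α₅α₁α₃+α₆α₁α₂; β₁₇ = α₁₇+α₁₃α₆+α₁₄α₅+α₁₅α₄+α₄α₅α₃+α₄α₆α₂+α₅α₆α₁+α₄(α₂α₆+α₅α₃)+α₅(α₁α₆+α₄α₃)+α₆(α₁α₅+α₄α₂); that is, ᾱ·β̄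 = β̄·ᾱ = 0. In particular P₃ with this multiplication is a group. -/
namespace P3

theorem ext' {α β : P3} (h1 : α.a1 = β.a1) (h2 : α.a2 = β.a2) (h3 : α.a3 = β.a3)
    (h4 : α.a4 = β.a4) (h5 : α.a5 = β.a5) (h6 : α.a6 = β.a6) (h7 : α.a7 = β.a7)
    (h8 : α.a8 = β.a8) (h9 : α.a9 = β.a9) (h10 : α.a10 = β.a10) (h11 : α.a11 = β.a11)
    (h12 : α.a12 = β.a12) (h13 : α.a13 = β.a13) (h14 : α.a14 = β.a14) (h15 : α.a15 = β.a15)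
    (h16 : α.a16 = β.a16) (h17 : α.a17 = β.a17) : α = β := by
  cases α; cases β; simp_all

theorem r_add (x y : ℤ) : r (x + y) = r x + r y := by simp [r]
theorem r_neg (x : ℤ) : r (-x) = r x := by simp [r]
theorem r_zero : r 0 = 0 := by simp [r]
theorem two_zero : (2 : ZMod 2) = 0 := by decide

theorem zero_mul' (α : P3) : mul zero α = α := by
  apply ext' <;> simp [mul, zero, r_zero]

theorem mul_zero' (α : P3) : mul α zero = α := by
  apply ext' <;> simp [mul, zero, r_zero]

theorem mul_inv' (α : P3) : mul α (inv α) = zero := by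
  apply ext' <;> simp only [mul, inv, zero, r_neg] <;> ring_nf <;>
    reduce_mod_char

theorem inv_mul' (α : P3) : mul (inv α) α = zero := by
  apply ext' <;> simp only [mul, inv, zero, r_neg] <;> ring_nf <;>
    reduce_mod_char

theorem mul_assoc' (α β γ : P3) : mul (mul α β) γ = mul α (mul β γ) := by
  apply ext' <;> simp only [mul, r_add] <;> rw [← sub_eq_zero] <;> ring_nf <;>
    reduce_mod_char

end P3

/-- the zero tuple is a two-sided identity for the explicit multiplication on
`P₃`, the explicitly given tuple `P3.inv α` is a two-sided inverse of `α`, and hence `P₃`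
with this multiplication is a group. -/
theorem P3_group :
    (∀ α : P3, P3.mul P3.zero α = α ∧ P3.mul α P3.zero = α) ∧
    (∀ α : P3, P3.mul α (P3.inv α) = P3.zero ∧ P3.mul (P3.inv α) α = P3.zero) ∧
    (∃ inst : Group P3, (∀ a b : P3, inst.mul a b = P3.mul a b) ∧ inst.one = P3.zero ∧
      ∀ a : P3, inst.inv a = P3.inv a) := by
  refine ⟨fun α => ⟨P3.zero_mul' α, P3.mul_zero' α⟩,
    fun α => ⟨P3.mul_inv' α, P3.inv_mul' α⟩,
    { mul := P3.mul
      one := P3.zero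
      inv := P3.inv
      mul_assoc := P3.mul_assoc'
      one_mul := P3.zero_mul'
      mul_one := P3.mul_zero'
      inv_mul_cancel := P3.inv_mul' }, fun _ _ => rfl, rfl, fun _ => rfl⟩
end

section
/- For every n ≥ 3, the multiplication defined on Pₙ = ℤ²ⁿ × 𝔽₂ᵐ by the explicit coordinate formulas is associative, the zero tuple is a two-sided identity, and every element has a two-sided inverse; hence Pₙ is a group. -/
/-- `Pₙ = ℤ²ⁿ × 𝔽₂ᵐ`, `m = 3·C(n,2) + 2·C(n,3)`: integer coordinates `lin l` for
`l = 1,…,2n`, and `𝔽₂`-coordinates `q1 i j`, `q2 i j`, `q3 i j` for `i < j` and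
`c1 i j k`, `c2 i j k` for `i < j < k`. -/
structure Pn (n : ℕ) where
  lin : Fin (2 * n) → ℤ
  q1 : (i j : Fin n) → i < j → ZMod 2
  q2 : (i j : Fin n) → i < j → ZMod 2
  q3 : (i j : Fin n) → i < j → ZMod 2
  c1 : (i j k : Fin n) → i < j → j < k → ZMod 2
  c2 : (i j k : Fin n) → i < j → j < k → ZMod 2

namespace Pn

variable {n : ℕ}

/-- Reduction of an integer coordinate modulo 2. -/
def r (x : ℤ) : ZMod 2 := (x : ZMod 2)

/-- The index `i` among the first `n` integer coordinates. -/
def lo (i : Fin n) : Fin (2 * n) := ⟨i.1, by have := i.2; omega⟩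

/-- The index `i + n` among the last `n` integer coordinates. -/
def hi (i : Fin n) : Fin (2 * n) := ⟨i.1 + n, by have := i.2; omega⟩

/-- The explicit multiplication on `Pₙ`. -/
def mul (α β : Pn n) : Pn n where
  lin := fun l => α.lin l + β.lin l
  q1 := fun i j h => α.q1 i j h + β.q1 i j h + r (α.lin (lo j)) * r (β.lin (lo i))
  q2 := fun i j h => α.q2 i j h + β.q2 i j h + r (α.lin (hi j)) * r (β.lin (hi i))
  q3 := fun i j h => α.q3 i j h + β.q3 i j h
    + r (α.lin (hi i)) * r (β.lin (lo j)) + r (α.lin (hi j)) * r (β.lin (lo i))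
  c1 := fun i j k hij hjk => α.c1 i j k hij hjk + β.c1 i j k hij hjk
    + α.q3 i j hij * r (β.lin (lo k)) + α.q3 i k (hij.trans hjk) * r (β.lin (lo j))
    + α.q3 j k hjk * r (β.lin (lo i))
    + r (α.lin (hi i)) * r (β.lin (lo j)) * r (β.lin (lo k))
    + r (α.lin (hi j)) * r (β.lin (lo i)) * r (β.lin (lo k))
    + r (α.lin (hi k)) * r (β.lin (lo i)) * r (β.lin (lo j))
  c2 := fun i j k hij hjk => α.c2 i j k hij hjk + β.c2 i j k hij hjk
    + α.q3 i j hij * r (β.lin (hi k)) + α.q3 i k (hij.trans hjk) * r (β.lin (hi j))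
    + α.q3 j k hjk * r (β.lin (hi i))
    + r (α.lin (hi i)) * r (α.lin (hi j)) * r (β.lin (lo k))
    + r (α.lin (hi i)) * r (α.lin (hi k)) * r (β.lin (lo j))
    + r (α.lin (hi j)) * r (α.lin (hi k)) * r (β.lin (lo i))
    + r (α.lin (hi i)) * (r (β.lin (lo j)) * r (β.lin (hi k)) + r (β.lin (hi j)) * r (β.lin (lo k)))
    + r (α.lin (hi j)) * (r (β.lin (lo i)) * r (β.lin (hi k)) + r (β.lin (hi i)) * r (β.lin (lo k)))
    + r (α.lin (hi k)) * (r (β.lin (lo i)) * r (β.lin (hi j)) + r (β.lin (hi i)) * r (β.lin (lo j)))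

/-- The zero tuple of `Pₙ`. -/
def zero : Pn n :=
  ⟨fun _ => 0, fun _ _ _ => 0, fun _ _ _ => 0, fun _ _ _ => 0,
    fun _ _ _ _ _ => 0, fun _ _ _ _ _ => 0⟩

/-- The explicit inverse on `Pₙ`. -/
def inv (α : Pn n) : Pn n where
  lin := fun l => -α.lin l
  q1 := fun i j h => α.q1 i j h + r (α.lin (lo i)) * r (α.lin (lo j))
  q2 := fun i j h => α.q2 i j h + r (α.lin (hi i)) * r (α.lin (hi j))
  q3 := fun i j h => α.q3 i j h
    + r (α.lin (lo j)) * r (α.lin (hi i)) + r (α.lin (lo i)) * r (α.lin (hi j))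
  c1 := fun i j k hij hjk => α.c1 i j k hij hjk
    + α.q3 i j hij * r (α.lin (lo k)) + α.q3 i k (hij.trans hjk) * r (α.lin (lo j))
    + α.q3 j k hjk * r (α.lin (lo i))
    + r (α.lin (hi i)) * r (α.lin (lo j)) * r (α.lin (lo k))
    + r (α.lin (hi j)) * r (α.lin (lo i)) * r (α.lin (lo k))
    + r (α.lin (hi k)) * r (α.lin (lo i)) * r (α.lin (lo j))
  c2 := fun i j k hij hjk => α.c2 i j k hij hjk
    + α.q3 i j hij * r (α.lin (hi k)) + α.q3 i k (hij.trans hjk) * r (α.lin (hi j))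
    + α.q3 j k hjk * r (α.lin (hi i))
    + r (α.lin (hi i)) * r (α.lin (hi j)) * r (α.lin (lo k))
    + r (α.lin (hi i)) * r (α.lin (hi k)) * r (α.lin (lo j))
    + r (α.lin (hi j)) * r (α.lin (hi k)) * r (α.lin (lo i))
    + r (α.lin (hi i)) * (r (α.lin (lo j)) * r (α.lin (hi k)) + r (α.lin (hi j)) * r (α.lin (lo k)))
    + r (α.lin (hi j)) * (r (α.lin (lo i)) * r (α.lin (hi k)) + r (α.lin (hi i)) * r (α.lin (lo k)))
    + r (α.lin (hi k)) * (r (α.lin (lo i)) * r (α.lin (hi j)) + r (α.lin (hi i)) * r (α.lin (lo j)))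

instance : Mul (Pn n) := ⟨Pn.mul⟩
instance : One (Pn n) := ⟨Pn.zero⟩
instance : Inv (Pn n) := ⟨Pn.inv⟩

end Pn

namespace Pn

/-- Componentwise extensionality for `Pn`. -/
theorem ext_coords {n : ℕ} {a b : Pn n} (h0 : ∀ l, a.lin l = b.lin l)
    (h1 : ∀ i j h, a.q1 i j h = b.q1 i j h) (h2 : ∀ i j h, a.q2 i j h = b.q2 i j h)
    (h3 : ∀ i j h, a.q3 i j h = b.q3 i j h)
    (h4 : ∀ i j k h h', a.c1 i j k h h' = b.c1 i j k h h')
    (h5 : ∀ i j k h h', a.c2 i j k h h' = b.c2 i j k h h') : a = b := by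
  cases a
  cases b
  simp only [mk.injEq]
  exact ⟨funext h0, by funext i j h; exact h1 i j h, by funext i j h; exact h2 i j h,
    by funext i j h; exact h3 i j h, by funext i j k h h'; exact h4 i j k h h',
    by funext i j k h h'; exact h5 i j k h h'⟩

theorem r_add (x y : ℤ) : r (x + y) = r x + r y := by simp [r]

theorem r_neg (x : ℤ) : r (-x) = r x := by simp [r]

theorem r_zero : r 0 = 0 := by simp [r]

theorem mul_assoc_coords {n : ℕ} (a b c : Pn n) : mul (mul a b) c = mul a (mul b c) := by
  apply ext_coords <;> intros <;> simp only [mul, r_add] <;> ring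

theorem zero_mul_coords {n : ℕ} (a : Pn n) : mul zero a = a := by
  apply ext_coords <;> intros <;> simp only [mul, zero, r_zero] <;> ring

theorem mul_zero_coords {n : ℕ} (a : Pn n) : mul a zero = a := by
  apply ext_coords <;> intros <;> simp only [mul, zero, r_zero] <;> ring

theorem mul_inv_coords {n : ℕ} (a : Pn n) : mul a (inv a) = zero := by
  apply ext_coords <;> intros <;> simp only [mul, inv, zero, r_neg] <;> ring_nf <;>
    reduce_mod_char

theorem inv_mul_coords {n : ℕ} (a : Pn n) : mul (inv a) a = zero := by
  have h := mul_inv_coords (inv a)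
  have h' : inv (inv a) = a := by
    rw [← zero_mul_coords (inv (inv a)), ← mul_inv_coords a, mul_assoc_coords, h,
      mul_zero_coords]
  rwa [h'] at h

end Pn

/-- for every `n ≥ 3`, the explicit multiplication on `Pₙ = ℤ²ⁿ × 𝔽₂ᵐ` is
associative, the zero tuple is a two-sided identity, and every element has a two-sided
inverse; hence `Pₙ` is a group. -/
theorem Pn_group (n : ℕ) (hn : 3 ≤ n) :
    (∀ a b c : Pn n, (a * b) * c = a * (b * c)) ∧
    (∀ a : Pn n, 1 * a = a ∧ a * 1 = a) ∧
    (∀ a : Pn n, ∃ b : Pn n, a * b = 1 ∧ b * a = 1) ∧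
    (∃ inst : Group (Pn n), (∀ a b : Pn n, inst.mul a b = a * b) ∧ inst.one = (1 : Pn n)) := by
  exact ⟨Pn.mul_assoc_coords, fun a => ⟨Pn.zero_mul_coords a, Pn.mul_zero_coords a⟩,
    fun a => ⟨Pn.inv a, Pn.mul_inv_coords a, Pn.inv_mul_coords a⟩,
    Group.ofLeftAxioms Pn.mul_assoc_coords Pn.zero_mul_coords Pn.inv_mul_coords,
    fun _ _ => rfl, rfl⟩
end

section
/- The map σ : P₃ → P₃ is a group automorphism of P₃ (σ(ᾱ·β̄) = σ(ᾱ)·σ(β̄) for all ᾱ,β̄, and σ is bijective) and has order 2, i.e. σ∘σ = id and σ ≠ id. -/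
/-- `σ` is a group automorphism of `P₃` of order 2. -/
theorem P3_sigma_automorphism_order_two :
    (∀ α β : P3, P3.sigma (P3.mul α β) = P3.mul (P3.sigma α) (P3.sigma β)) ∧
    Function.Bijective P3.sigma ∧
    P3.sigma ∘ P3.sigma = id ∧ P3.sigma ≠ id := by
  have h2 : (2 : ZMod 2) = 0 := by decide
  have hinv : ∀ α : P3, P3.sigma (P3.sigma α) = α := by
    rintro ⟨a1, a2, a3, a4, a5, a6, a7, a8, a9, a10, a11, a12, a13, a14, a15, a16, a17⟩
    simp only [P3.sigma, P3.mk.injEq, true_and]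
    generalize P3.r a1 = x1, P3.r a2 = x2, P3.r a3 = x3, P3.r a4 = x4, P3.r a5 = x5,
      P3.r a6 = x6
    refine ⟨?_, ?_, ?_, ?_, ?_⟩ <;> (rw [← sub_eq_zero]; ring_nf; reduce_mod_char)
  have hadd : ∀ x y : ℤ, P3.r (x + y) = P3.r x + P3.r y := by
    intro x y
    simp [P3.r]
  refine ⟨?_, Function.Involutive.bijective hinv, funext hinv, ?_⟩
  · rintro ⟨a1, a2, a3, a4, a5, a6, a7, a8, a9, a10, a11, a12, a13, a14, a15, a16, a17⟩
      ⟨b1, b2, b3, b4, b5, b6, b7, b8, b9, b10, b11, b12, b13, b14, b15, b16, b17⟩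
    simp only [P3.sigma, P3.mul, P3.mk.injEq, true_and, hadd]
    generalize P3.r a1 = x1, P3.r a2 = x2, P3.r a3 = x3, P3.r a4 = x4, P3.r a5 = x5,
      P3.r a6 = x6, P3.r b1 = y1, P3.r b2 = y2, P3.r b3 = y3, P3.r b4 = y4, P3.r b5 = y5,
      P3.r b6 = y6
    refine ⟨?_, ?_, ?_, ?_, ?_⟩ <;> (rw [← sub_eq_zero]; ring_nf; reduce_mod_char)
  · intro h
    have h1 := congrArg P3.a1 (congrFun h ⟨1, 0, 0, 0, 0, 0, 0, 0, 0, 0, 0, 0, 0, 0, 0, 0, 0⟩)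
    simp [P3.sigma] at h1
end

section
/- The map τ : P₃ → P₃ is a group automorphism of P₃ (τ(ᾱ·β̄) = τ(ᾱ)·τ(β̄) for all ᾱ,β̄, and τ is bijective) and has order 2, i.e. τ∘τ = id and τ ≠ id. -/
theorem P3.r_add_s5 (x y : ℤ) : P3.r (x + y) = P3.r x + P3.r y := by simp [P3.r]

theorem P3.r_neg_s5 (x : ℤ) : P3.r (-x) = P3.r x := by
  simp [P3.r, CharTwo.neg_eq]

theorem P3.r_sub (x y : ℤ) : P3.r (x - y) = P3.r x + P3.r y := by
  rw [sub_eq_add_neg, P3.r_add_s5, P3.r_neg_s5]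

theorem P3.sq_self (x : ZMod 2) : x * x = x := by
  revert x; decide

theorem P3.two_zero_s5 : (2 : ZMod 2) = 0 := by decide

theorem P3.tau_tau (α : P3) : P3.tau (P3.tau α) = α := by
  obtain ⟨a1, a2, a3, a4, a5, a6, a7, a8, a9, a10, a11, a12, a13, a14, a15, a16, a17⟩ := α
  simp only [P3.tau, P3.mk.injEq, P3.r_neg_s5, P3.r_sub]
  refine ⟨?_, ?_, ?_, ?_, ?_, ?_, ?_, ?_, ?_, ?_, ?_, ?_, ?_, ?_, ?_, ?_, ?_⟩
  all_goals first | trivial | ring1 | (ring_nf; simp only [P3.two_zero_s5, mul_zero, add_zero])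

theorem P3.tau_mul (α β : P3) : P3.tau (P3.mul α β) = P3.mul (P3.tau α) (P3.tau β) := by
  obtain ⟨a1, a2, a3, a4, a5, a6, a7, a8, a9, a10, a11, a12, a13, a14, a15, a16, a17⟩ := α
  obtain ⟨b1, b2, b3, b4, b5, b6, b7, b8, b9, b10, b11, b12, b13, b14, b15, b16, b17⟩ := β
  simp only [P3.tau, P3.mul, P3.mk.injEq, P3.r_add_s5, P3.r_neg_s5, P3.r_sub]
  refine ⟨?_, ?_, ?_, ?_, ?_, ?_, ?_, ?_, ?_, ?_, ?_, ?_, ?_, ?_, ?_, ?_, ?_⟩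
  all_goals first | trivial | ring1 | (ring_nf; simp only [P3.two_zero_s5, mul_zero, add_zero])

/-- `τ` is a group automorphism of `P₃` of order 2. -/
theorem P3_tau_automorphism_order_two :
    (∀ α β : P3, P3.tau (P3.mul α β) = P3.mul (P3.tau α) (P3.tau β)) ∧
    Function.Bijective P3.tau ∧
    P3.tau ∘ P3.tau = id ∧ P3.tau ≠ id := by
  refine ⟨P3.tau_mul, Function.Involutive.bijective P3.tau_tau, funext P3.tau_tau, ?_⟩
  intro h
  have h1 := congrArg P3.a4 (congrFun h ⟨0, 0, 0, 1, 0, 0, 0, 0, 0, 0, 0, 0, 0, 0, 0, 0, 0⟩)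
  simp [P3.tau] at h1
end

section
/- The composite ρ := σ∘τ (i.e. ρ(x) = σ(τ(x))) is a group automorphism of P₃ of order 3: ρ∘ρ∘ρ = id and ρ ≠ id. -/
namespace P3

theorem r_sub_s6 (x y : ℤ) : r (x - y) = r x + r y := by simp [r, CharTwo.sub_eq_add]

theorem sq_eq (x : ZMod 2) : x ^ 2 = x := by revert x; decide

theorem sigma_mul (α β : P3) : sigma (mul α β) = mul (sigma α) (sigma β) := by
  have hs := sq_eq
  simp only [sigma, mul, P3.mk.injEq, r_add]
  refine ⟨?_, ?_, ?_, ?_, ?_, ?_, ?_, ?_, ?_, ?_, ?_, ?_, ?_, ?_, ?_, ?_, ?_⟩ <;> grind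

theorem tau_mul_s6 (α β : P3) : tau (mul α β) = mul (tau α) (tau β) := by
  have hs := sq_eq
  simp only [tau, mul, P3.mk.injEq, r_add, r_sub_s6, r_neg]
  refine ⟨?_, ?_, ?_, ?_, ?_, ?_, ?_, ?_, ?_, ?_, ?_, ?_, ?_, ?_, ?_, ?_, ?_⟩ <;> grind

theorem rho_cube (α : P3) : rho (rho (rho α)) = α := by
  have hs := sq_eq
  cases α
  simp only [rho, Function.comp, sigma, tau, P3.mk.injEq, r_add, r_sub_s6, r_neg]
  refine ⟨?_, ?_, ?_, ?_, ?_, ?_, ?_, ?_, ?_, ?_, ?_, ?_, ?_, ?_, ?_, ?_, ?_⟩ <;> grind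

end P3

/-- `ρ := σ ∘ τ` is a group automorphism of `P₃` of order 3. -/
theorem P3_rho_automorphism_order_three :
    (∀ α β : P3, P3.rho (P3.mul α β) = P3.mul (P3.rho α) (P3.rho β)) ∧
    Function.Bijective P3.rho ∧
    P3.rho ∘ P3.rho ∘ P3.rho = id ∧ P3.rho ≠ id := by
  refine ⟨fun α β => ?_, ⟨fun x y h => ?_, fun y => ⟨_, P3.rho_cube y⟩⟩,
    funext P3.rho_cube, fun h => ?_⟩
  · simp only [P3.rho, Function.comp, P3.tau_mul_s6, P3.sigma_mul]
  · rw [← P3.rho_cube x, h, P3.rho_cube]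
  · have h1 := congrArg P3.a1 (congrFun h ⟨1, 0, 0, 0, 0, 0, 0, 0, 0, 0, 0, 0, 0, 0, 0, 0, 0⟩)
    simp [P3.rho, P3.sigma, P3.tau] at h1
end

section
/- For every n ≥ 3 and every triple α = (i,j,k) with 1 ≤ i < j < k ≤ n, the coordinate-restriction map π_α : Pₙ → P₃ defined by π_α(x̄) = (xᵢ, xⱼ, xₖ, x_{i+n}, x_{j+n}, x_{k+n}, xᵢⱼ¹, xᵢₖ¹, xⱼₖ¹, xᵢⱼ², xᵢₖ², xⱼₖ², xᵢⱼ³, xᵢₖ³, xⱼₖ³, xᵢⱼₖ¹, xᵢⱼₖ²) is a group homomorphism, and the induced map π : Pₙ → ∏_{α ∈ T} P₃ (product over T = {(i,j,k) : 1 ≤ i < j < k ≤ n}), whose α-component is π_α, is an injective group homomorphism. -/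
instance : Mul P3 := ⟨P3.mul⟩

/-- The index set `T = {(i,j,k) : 1 ≤ i < j < k ≤ n}`. -/
def TripleIdx (n : ℕ) := {t : Fin n × Fin n × Fin n // t.1 < t.2.1 ∧ t.2.1 < t.2.2}

/-- The coordinate-restriction map `π_α : Pₙ → P₃` for a triple `i < j < k`. -/
def projP3 {n : ℕ} (i j k : Fin n) (hij : i < j) (hjk : j < k) (x : Pn n) : P3 where
  a1 := x.lin (Pn.lo i)
  a2 := x.lin (Pn.lo j)
  a3 := x.lin (Pn.lo k)
  a4 := x.lin (Pn.hi i)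
  a5 := x.lin (Pn.hi j)
  a6 := x.lin (Pn.hi k)
  a7 := x.q1 i j hij
  a8 := x.q1 i k (hij.trans hjk)
  a9 := x.q1 j k hjk
  a10 := x.q2 i j hij
  a11 := x.q2 i k (hij.trans hjk)
  a12 := x.q2 j k hjk
  a13 := x.q3 i j hij
  a14 := x.q3 i k (hij.trans hjk)
  a15 := x.q3 j k hjk
  a16 := x.c1 i j k hij hjk
  a17 := x.c2 i j k hij hjk

/-- The induced map `π : Pₙ → ∏_{α ∈ T} P₃`, whose `α`-component is `π_α`. -/
def projAll {n : ℕ} (x : Pn n) : TripleIdx n → P3 :=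
  fun t => projP3 t.1.1 t.1.2.1 t.1.2.2 t.2.1 t.2.2 x

/-- If all restrictions agree, then all coordinates attached to a pair `i < j` agree. -/
theorem pair_coords_eq {n : ℕ} (hn : 3 ≤ n) {a b : Pn n}
    (H : ∀ (i j k : Fin n) (hij : i < j) (hjk : j < k),
      projP3 i j k hij hjk a = projP3 i j k hij hjk b)
    (i j : Fin n) (h : i < j) :
    (a.lin (Pn.lo i) = b.lin (Pn.lo i) ∧ a.lin (Pn.lo j) = b.lin (Pn.lo j) ∧
      a.lin (Pn.hi i) = b.lin (Pn.hi i) ∧ a.lin (Pn.hi j) = b.lin (Pn.hi j)) ∧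
    a.q1 i j h = b.q1 i j h ∧ a.q2 i j h = b.q2 i j h ∧ a.q3 i j h = b.q3 i j h := by
  have hk : (∃ k, k < i) ∨ (∃ k, i < k ∧ k < j) ∨ (∃ k, j < k) := by
    by_cases h0 : 0 < i.1
    · exact Or.inl ⟨⟨0, by omega⟩, h0⟩
    · by_cases h1 : 1 < j.1
      · refine Or.inr (Or.inl ⟨⟨1, by omega⟩, ?_, h1⟩)
        rw [Fin.lt_def]
        show i.1 < 1
        omega
      · refine Or.inr (Or.inr ⟨⟨2, by omega⟩, ?_⟩)
        rw [Fin.lt_def]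
        show j.1 < 2
        omega
  rcases hk with ⟨k, hk⟩ | ⟨k, hik, hkj⟩ | ⟨k, hk⟩
  · have := H k i j hk h
    simp only [projP3, P3.mk.injEq] at this
    tauto
  · have := H i k j hik hkj
    simp only [projP3, P3.mk.injEq] at this
    tauto
  · have := H i j k h hk
    simp only [projP3, P3.mk.injEq] at this
    tauto

/-- STATEMENT 9: each coordinate-restriction map `π_α : Pₙ → P₃` (for a triple
`i < j < k`) is a group homomorphism, and the induced map `π : Pₙ → ∏_{α ∈ T} P₃` is an
injective group homomorphism. -/
theorem Pn_embeds_in_product_of_P3 (n : ℕ) (hn : 3 ≤ n) :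
    (∀ (i j k : Fin n) (hij : i < j) (hjk : j < k), ∀ a b : Pn n,
      projP3 i j k hij hjk (a * b) = projP3 i j k hij hjk a * projP3 i j k hij hjk b) ∧
    (∀ a b : Pn n, projAll (a * b) = fun t => projAll a t * projAll b t) ∧
    Function.Injective (projAll (n := n)) := by
  refine ⟨fun _ _ _ _ _ _ _ => rfl, fun _ _ => rfl, ?_⟩
  intro a b hab
  have H : ∀ (i j k : Fin n) (hij : i < j) (hjk : j < k),
      projP3 i j k hij hjk a = projP3 i j k hij hjk b :=
    fun i j k hij hjk => congrFun hab ⟨(i, j, k), hij, hjk⟩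
  have P := pair_coords_eq hn H
  have L : ∀ i : Fin n, a.lin (Pn.lo i) = b.lin (Pn.lo i) ∧
      a.lin (Pn.hi i) = b.lin (Pn.hi i) := by
    intro i
    by_cases h0 : 0 < i.1
    · have := P ⟨0, by omega⟩ i h0
      tauto
    · have := P i ⟨1, by omega⟩ (by rw [Fin.lt_def]; show i.1 < 1; omega)
      tauto
  have e0 : a.lin = b.lin := by
    funext l
    by_cases hl : l.1 < n
    · exact (L ⟨l.1, hl⟩).1
    · have h := (L ⟨l.1 - n, by omega⟩).2
      have e : Pn.hi (⟨l.1 - n, by omega⟩ : Fin n) = l := by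
        apply Fin.ext
        show l.1 - n + n = l.1
        omega
      rwa [e] at h
  have e1 : a.q1 = b.q1 := by funext i j h; exact (P i j h).2.1
  have e2 : a.q2 = b.q2 := by funext i j h; exact (P i j h).2.2.1
  have e3 : a.q3 = b.q3 := by funext i j h; exact (P i j h).2.2.2
  have e4 : a.c1 = b.c1 := by
    funext i j k hij hjk
    exact congrArg P3.a16 (H i j k hij hjk)
  have e5 : a.c2 = b.c2 := by
    funext i j k hij hjk
    exact congrArg P3.a17 (H i j k hij hjk)
  cases a
  cases b
  simp only [Pn.mk.injEq]
  exact ⟨e0, e1, e2, e3, e4, e5⟩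
end

section
/- Let (G, σ, ρ) be a group with triality and M = {g⁻¹·σ(g) : g ∈ G}. Define m∘n = ρ(m)⁻¹ · n · ρ(ρ(m))⁻¹ for m, n ∈ M. Then: (a) M is closed under ∘ and 1 ∈ M; (b) (M, ∘) is a loop with identity 1, i.e. 1∘m = m∘1 = m for all m ∈ M, and for all a, b ∈ M each of the equations a∘x = b and y∘a = b has a unique solution x, y ∈ M; (c) ∘ satisfies the left Moufang identity ((a∘b)∘a)∘c = a∘(b∘(a∘c)) for all a, b, c ∈ M. Hence (M, ∘) is a Moufang loop. -/
/-- STATEMENT 15: let `(G, σ, ρ)` be a group with triality and `M = {g⁻¹·σ(g) : g ∈ G}`.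
With `m ∘ n := ρ(m)⁻¹ · n · ρ(ρ(m))⁻¹`: (a) `M` is closed under `∘` and `1 ∈ M`;
(b) `(M, ∘)` is a loop with identity `1`; (c) `∘` satisfies the left Moufang identity on
`M`. Hence `(M, ∘)` is a Moufang loop. -/
theorem moufang_loop_of_group_with_triality
    (G : Type*) [Group G] (σ ρ : G → G)
    (hσhom : ∀ a b : G, σ (a * b) = σ a * σ b) (hσbij : Function.Bijective σ)
    (hρhom : ∀ a b : G, ρ (a * b) = ρ a * ρ b) (hρbij : Function.Bijective ρ)
    (hσ2 : σ ∘ σ = id) (hρ3 : ρ ∘ ρ ∘ ρ = id) (hσρ2 : (σ ∘ ρ) ∘ (σ ∘ ρ) = id)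
    (htriality : ∀ g : G, (g⁻¹ * σ g) * ρ (g⁻¹ * σ g) * ρ (ρ (g⁻¹ * σ g)) = 1)
    (M : Set G) (hM : M = {m : G | ∃ g : G, m = g⁻¹ * σ g})
    (mul : G → G → G) (hmul : ∀ m n : G, mul m n = (ρ m)⁻¹ * n * (ρ (ρ m))⁻¹) :
    -- (a) closure and identity membership
    (∀ m ∈ M, ∀ n ∈ M, mul m n ∈ M) ∧ (1 : G) ∈ M ∧
    -- (b) loop structure: identity and unique solvability of equations
    (∀ m ∈ M, mul 1 m = m ∧ mul m 1 = m) ∧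
    (∀ a ∈ M, ∀ b ∈ M,
      (∃! x, x ∈ M ∧ mul a x = b) ∧ (∃! y, y ∈ M ∧ mul y a = b)) ∧
    -- (c) left Moufang identity
    (∀ a ∈ M, ∀ b ∈ M, ∀ c ∈ M,
      mul (mul (mul a b) a) c = mul a (mul b (mul a c))) := by
  have s2 : ∀ x, σ (σ x) = x := fun x => congrFun hσ2 x
  have r3 : ∀ x, ρ (ρ (ρ x)) = x := fun x => congrFun hρ3 x
  have sr2 : ∀ x, σ (ρ (σ (ρ x))) = x := fun x => congrFun hσρ2 x
  have rinv : ∀ x, ρ x⁻¹ = (ρ x)⁻¹ := fun x => map_inv (MonoidHom.mk' ρ hρhom) x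
  have sinv : ∀ x, σ x⁻¹ = (σ x)⁻¹ := fun x => map_inv (MonoidHom.mk' σ hσhom) x
  have sone : σ 1 = 1 := map_one (MonoidHom.mk' σ hσhom)
  have rone : ρ 1 = 1 := map_one (MonoidHom.mk' ρ hρhom)
  have srr : ∀ x, σ (ρ (ρ x)) = ρ (σ x) := by
    intro x
    have h := sr2 (ρ (ρ x))
    rw [r3] at h
    rw [← h, s2]
  have sr : ∀ x, σ (ρ x) = ρ (ρ (σ x)) := by
    intro x
    have h3 := congrArg σ (sr2 x)
    rw [s2] at h3
    rw [← h3, r3]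
  have mS : ∀ m ∈ M, σ m = m⁻¹ := by
    intro m hm
    rw [hM] at hm
    obtain ⟨g, rfl⟩ := hm
    simp [hσhom, sinv, s2]
  have mI : ∀ m ∈ M, m⁻¹ ∈ M := by
    intro m hm
    rw [hM] at hm ⊢
    obtain ⟨g, rfl⟩ := hm
    exact ⟨σ g, by simp [s2]⟩
  have mT : ∀ m ∈ M, m * ρ m * ρ (ρ m) = 1 := by
    intro m hm
    rw [hM] at hm
    obtain ⟨g, rfl⟩ := hm
    exact htriality g
  -- twisted conjugation
  have mC : ∀ m ∈ M, ∀ h, h⁻¹ * m * σ h ∈ M := by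
    intro m hm h
    rw [hM] at hm ⊢
    obtain ⟨g, rfl⟩ := hm
    exact ⟨g * h, by simp [hσhom, mul_assoc]⟩
  have one : (1 : G) ∈ M := by
    rw [hM]
    exact ⟨1, by simp [sone]⟩
  have cl : ∀ m ∈ M, ∀ n ∈ M, mul m n ∈ M := by
    intro m hm n hn
    have h := mC n hn (ρ m)
    rwa [sr, mS m hm, rinv, rinv, ← hmul] at h
  have e1 : ∀ m ∈ M, m * ρ m = (ρ (ρ m))⁻¹ := fun m hm => eq_inv_of_mul_eq_one_left (mT m hm)
  have e2 : ∀ m ∈ M, ρ m * m = (ρ (ρ m))⁻¹ := by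
    intro m hm
    have h := e1 _ (mI m hm)
    rw [rinv, rinv, inv_inv, ← mul_inv_rev] at h
    rw [← h, inv_inv]
  have e3 : ∀ m ∈ M, (ρ m)⁻¹ * (ρ (ρ m))⁻¹ = m := by
    intro m hm
    rw [← e2 m hm]; group
  have e4 : ∀ m ∈ M, (ρ (ρ m))⁻¹ * (ρ m)⁻¹ = m := by
    intro m hm
    rw [← e1 m hm]; group
  have e5 : ∀ m ∈ M, (ρ (ρ m))⁻¹ * m⁻¹ = ρ m := by
    intro m hm
    rw [← e2 m hm]; group
  -- alternative formula for the product
  have alt : ∀ m ∈ M, ∀ n ∈ M, mul m n = (ρ (ρ n))⁻¹ * m * (ρ n)⁻¹ := by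
    have key : ∀ m ∈ M, ∀ n ∈ M,
        n * ρ m * ρ (ρ n) = (ρ (ρ m))⁻¹ * (ρ n)⁻¹ * m⁻¹ := by
      intro m hm n hn
      have h1 : mul m n * ρ (ρ (mul m n)) = (ρ (mul m n))⁻¹ := by
        have hinv := congrArg (fun x => x⁻¹) (e5 _ (cl m hm n hn))
        simpa using hinv
      simp only [hmul, hρhom, rinv, r3] at h1
      calc n * ρ m * ρ (ρ n)
          = n * ((ρ (ρ m))⁻¹ * m⁻¹) * ρ (ρ n) := by rw [e5 m hm]
        _ = ρ m * ((ρ m)⁻¹ * n * (ρ (ρ m))⁻¹ * (m⁻¹ * ρ (ρ n) * (ρ m)⁻¹)) * ρ m := by group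
        _ = (ρ m * m) * (ρ n)⁻¹ * ((ρ m)⁻¹ * (ρ (ρ m))⁻¹)⁻¹ := by rw [h1]; group
        _ = _ := by rw [e2 m hm, e3 m hm]
    intro m hm n hn
    have h := congrArg (fun x => ρ (ρ x)) (key m hm _ (mI n hn))
    simp only [hρhom, rinv, r3, inv_inv] at h
    rw [hmul, h]
  refine ⟨cl, one, ?_, ?_, ?_⟩
  · intro m hm
    refine ⟨by simp [hmul, rone], ?_⟩
    rw [hmul, mul_one, e3 m hm]
  · intro a ha b hb
    refine ⟨⟨ρ a * b * ρ (ρ a), ⟨?_, ?_⟩, ?_⟩, ⟨ρ (ρ a) * b * ρ a, ⟨?_, ?_⟩, ?_⟩⟩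
    · have h := cl _ (mI a ha) b hb
      simpa [hmul, rinv] using h
    · rw [hmul]; group
    · rintro x ⟨-, rfl⟩
      rw [hmul]; group
    · have h := cl b hb _ (mI a ha)
      rw [alt b hb _ (mI a ha)] at h
      simpa [rinv] using h
    · have h := cl b hb _ (mI a ha)
      rw [alt b hb _ (mI a ha)] at h
      simp only [rinv, inv_inv] at h
      rw [alt _ h a ha]; group
    · rintro y ⟨hy, rfl⟩
      rw [alt y hy a ha]; group
  · intro a ha b hb c hc
    have hq : mul (mul a b) a = a * b * a := by
      rw [alt _ (cl a ha b hb) a ha, hmul]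
      calc _ = ((ρ (ρ a))⁻¹ * (ρ a)⁻¹) * b * ((ρ (ρ a))⁻¹ * (ρ a)⁻¹) := by group
        _ = _ := by rw [e4 a ha]
    rw [hq]
    simp only [hmul, hρhom]
    group
end

section
/- Let L be a Moufang loop in which every associator satisfies (x,y,z)·(x,y,z) = 1 and in which every commutator [a,b] and every associator (a,b,c) is central. Then for all x, y, z ∈ L: [x·y, z] = ([x,z]·[y,z])·(x,y,z). -/
/-- A Moufang loop: a type with a multiplication `·` and an identity `1` such that
`1·x = x·1 = x`, the equations `a·x = b` and `y·a = b` have unique solutions, and the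
left Moufang identity `((x·y)·x)·z = x·(y·(x·z))` holds. -/
class MoufangLoop (L : Type*) extends Mul L, One L where
  one_mul : ∀ x : L, 1 * x = x
  mul_one : ∀ x : L, x * 1 = x
  existsUnique_mul_left : ∀ a b : L, ∃! x : L, a * x = b
  existsUnique_mul_right : ∀ a b : L, ∃! y : L, y * a = b
  moufang : ∀ x y z : L, ((x * y) * x) * z = x * (y * (x * z))

namespace MoufangLoop

variable {L : Type*} [MoufangLoop L]

/-- The loop commutator `[a,b]`: the unique element with `a·b = (b·a)·[a,b]`. -/
noncomputable def comm (a b : L) : L :=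
  (existsUnique_mul_left (b * a) (a * b)).choose

theorem comm_spec (a b : L) : (b * a) * comm a b = a * b :=
  (existsUnique_mul_left (b * a) (a * b)).choose_spec.1

/-- The loop associator `(a,b,c)`: the unique element with `(a·b)·c = (a·(b·c))·(a,b,c)`. -/
noncomputable def assoc (a b c : L) : L :=
  (existsUnique_mul_left (a * (b * c)) ((a * b) * c)).choose

theorem assoc_spec (a b c : L) : (a * (b * c)) * assoc a b c = (a * b) * c :=
  (existsUnique_mul_left (a * (b * c)) ((a * b) * c)).choose_spec.1

/-- An element `z` is central if it commutes with every element and every associator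
involving it is trivial. -/
def IsCentral (z : L) : Prop :=
  (∀ x : L, z * x = x * z) ∧
  ∀ x y : L, assoc z x y = 1 ∧ assoc x z y = 1 ∧ assoc x y z = 1

end MoufangLoop

namespace MoufangLoop

section helpers

variable {L : Type*} [MoufangLoop L]

theorem cancelL {a x y : L} (h : a * x = a * y) : x = y :=
  (existsUnique_mul_left a (a * y)).unique h rfl

theorem cancelR {a x y : L} (h : x * a = y * a) : x = y :=
  (existsUnique_mul_right a (y * a)).unique h rfl

/-- Convenient form of centrality. -/
def IsC (z : L) : Prop :=
  ∀ x y : L, z * x = x * z ∧ (z * x) * y = z * (x * y) ∧ x * (z * y) = z * (x * y)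

theorem IsCentral.isC {z : L} (h : IsCentral z) : IsC z := by
  intro x y
  obtain ⟨h1, h2⟩ := h
  have e1 := assoc_spec z x y
  have e2 := assoc_spec x z y
  rw [(h2 x y).1, mul_one] at e1
  rw [(h2 x y).2.1, mul_one] at e2
  exact ⟨h1 x, e1.symm, by rw [e2, ← h1 x, ← e1]⟩

/-- Central elements of exponent two. -/
def NN (L : Type*) [MoufangLoop L] : Type _ := {z : L // z * z = 1 ∧ IsC z}

theorem isC_mul {a b : L} (ha : IsC a) (hb : IsC b) : IsC (a * b) := by
  intro x y
  refine ⟨?_, ?_, ?_⟩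
  · rw [(ha b x).2.1, (hb x x).1, (ha x b).2.2]
  · rw [(ha b x).2.1, (ha (b * x) y).2.1, (hb x y).2.1, (ha b (x * y)).2.1]
  · rw [(ha b y).2.1, (ha x (b * y)).2.2, (hb x y).2.2, (ha b (x * y)).2.1]

instance : Add (NN L) where
  add a b := ⟨a.1 * b.1, by
    rw [(a.2.2 b.1 (a.1 * b.1)).2.1, (a.2.2 b.1 b.1).2.2, b.2.1, mul_one, a.2.1],
    isC_mul a.2.2 b.2.2⟩

instance : Zero (NN L) where
  zero := ⟨1, one_mul 1, fun x y => by simp only [one_mul, mul_one]; simp⟩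

instance : Neg (NN L) where
  neg a := a

instance : AddCommGroup (NN L) where

  add_assoc a b c := Subtype.ext (a.2.2 b.1 c.1).2.1
  zero_add a := Subtype.ext (one_mul a.1)
  add_zero a := Subtype.ext (mul_one a.1)
  neg_add_cancel a := Subtype.ext a.2.1
  add_comm a b := Subtype.ext (a.2.2 b.1 b.1).1
  nsmul := nsmulRec
  zsmul := zsmulRec

/-- Action of `NN` on the loop. -/
def act (n : NN L) (x : L) : L := n.1 * x

theorem act_mul (n : NN L) (x y : L) : act n x * y = act n (x * y) := (n.2.2 x y).2.1
theorem mul_act (n : NN L) (x y : L) : x * act n y = act n (x * y) := (n.2.2 x y).2.2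
theorem act_act (n m : NN L) (x : L) : act n (act m x) = act (n + m) x := (n.2.2 m.1 x).2.1.symm
theorem act_zero (x : L) : act 0 x = x := one_mul x
theorem act_inj {n m : NN L} {x : L} (h : act n x = act m x) : n = m := Subtype.ext (cancelR h)
theorem act_inj' {n : NN L} {x : L} (h : act n x = x) : n = 0 :=
  act_inj (h.trans (act_zero x).symm)
theorem act_eq_iff {n m : NN L} {x : L} : act n x = act m x ↔ n = m :=
  ⟨act_inj, fun h => h ▸ rfl⟩
theorem two (n : NN L) : n + n = 0 := Subtype.ext n.2.1
theorem add_zero_imp {n m : NN L} (h : n + m = 0) : n = m := by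
  have := two m
  grind

theorem flex (x y : L) : (x * y) * x = x * (y * x) := by
  have := moufang x y 1
  simpa only [mul_one] using this

theorem exists_inv : ∃ i : L → L, (∀ x, x * i x = 1) ∧ (∀ x, i x * x = 1) ∧
    (∀ x y, i x * (x * y) = y) ∧ (∀ x y, x * (i x * y) = y) ∧ (∀ x y, (y * x) * i x = y) ∧
    (∀ x y, i (x * y) = i y * i x) ∧ (∀ x, i (i x) = x) := by
  choose i hi _ using fun x : L => existsUnique_mul_left x 1
  have h3 : ∀ x y, i x * (x * y) = y := by
    intro x y
    have := moufang x (i x) y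
    rw [hi, one_mul] at this
    exact (cancelL this).symm
  have h2 : ∀ x, i x * x = 1 := fun x => by simpa only [mul_one] using h3 x 1
  have h7 : ∀ x, i (i x) = x := fun x => cancelL (a := i x) (by rw [hi, h2])
  have h4 : ∀ x y, x * (i x * y) = y := fun x y => by
    have := h3 (i x) y
    rwa [h7] at this
  have h5 : ∀ x y, (y * x) * i x = y := by
    intro x y
    have := moufang x (i x * y) (i x)
    rwa [hi, mul_one, h4] at this
  refine ⟨i, hi, h2, h3, h4, h5, ?_, h7⟩
  intro x y
  apply cancelR (a := x)
  have e : i (x * y) * x = i y := by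
    have := h3 (x * y) (i y)
    rwa [h5] at this
  have e2 := h5 (i x) (i y)
  rw [h7] at e2
  rw [e, e2]

theorem middle (x c d : L) : (x * c) * (d * x) = (x * (c * d)) * x := by
  obtain ⟨i, hi, h2, h3, h4, h5, h6, h7⟩ := exists_inv (L := L)
  have e := moufang x (c * d) (i x * i d)
  rw [h4, h5, ← h6] at e
  rw [← e]
  have := h5 (i (d * x)) ((x * (c * d)) * x)
  rwa [h7] at this

theorem assoc_symm (A : L → L → L → NN L)
    (hA : ∀ a b c, (a * b) * c = act (A a b c) (a * (b * c)))
    (hc : ∀ x y : L, ∃ c : L, IsC c ∧ x * y = c * (y * x)) :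
    ∀ x y z, A x y z = A y x z := by
  obtain ⟨i, hi, h2, h3, h4, h5, h6, h7⟩ := exists_inv (L := L)
  have hA' : ∀ a b c, a * (b * c) = act (A a b c) ((a * b) * c) := by
    intro a b c
    rw [hA, act_act, two, act_zero]
  have s1 : ∀ x y b c, A (x * y) b c = A (y * x) b c := by
    intro x y b c
    obtain ⟨k, hk, e⟩ := hc x y
    have h := hA (x * y) b c
    rw [e, (hk _ _).2.1, (hk _ _).2.1, (hk _ _).2.1, ← mul_act] at h
    have h := cancelL h
    rw [hA] at h
    rw [e]
    exact (act_inj h).symm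
  have s3 : ∀ x y b c, A b c (x * y) = A b c (y * x) := by
    intro x y b c
    obtain ⟨k, hk, e⟩ := hc x y
    have h := hA b c (x * y)
    rw [e, (hk _ _).2.2, (hk _ _).2.2, (hk _ _).2.2, ← mul_act] at h
    have h := cancelL h
    rw [hA] at h
    rw [e]
    exact (act_inj h).symm
  have flx : ∀ x y, A x y x = 0 := by
    intro x y
    have h := hA x y x
    rw [flex] at h
    exact act_inj' h.symm
  have l1 : ∀ x y z, A (x * y) x z = A x y (x * z) := by
    intro x y z
    have h := moufang x y z
    rw [hA (x * y) x z, hA x y (x * z), act_act] at h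
    exact add_zero_imp (act_inj' h)
  have C : ∀ x y z, A x y (x * z) = A y z x := by
    intro x y z
    have h := middle x y z
    rw [hA x y (z * x), hA' y z x, mul_act, act_act, flex] at h
    rw [s3]
    exact add_zero_imp (act_inj' h)
  have D : ∀ x y z, A (x * y) z x = A x y z := by
    intro x y z
    have h := middle x y z
    rw [hA' (x * y) z x, hA x y z, act_mul, act_act] at h
    exact add_zero_imp (act_inj' h)
  have E : ∀ x y z, A (x * y) x z = A y z x := fun x y z => (l1 x y z).trans (C x y z)
  have lip : ∀ x y z, A (i x) (x * y) z = A x y z := by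
    intro x y z
    have h := hA (i x) (x * y) z
    rw [h3, hA x y z, mul_act, h3, act_act] at h
    exact add_zero_imp (act_inj' h.symm)
  have cyc : ∀ x y z, A (i x) y z = A y z x := by
    intro x y z
    have h1 := D x (i x * y) z
    have h2 := lip (i x) y z
    rw [h4] at h1
    rw [h7] at h2
    rw [h1, h2]
  have cyc' : ∀ x y z, A x y z = A y z (i x) := by
    intro x y z
    have h := cyc (i x) y z
    rwa [h7] at h
  have inv3 : ∀ x y z, A (i x) (i y) (i z) = A x y z := by
    intro x y z
    rw [cyc' x y z, cyc' y z, cyc' z]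
  have iact : ∀ n x, i (act n x) = act n (i x) := by
    intro n x
    apply cancelL (a := act n x)
    rw [hi, act_mul, mul_act, act_act, two, act_zero, hi]
  have rev : ∀ x y z, A x y z = A z y x := by
    intro x y z
    have h := congrArg i (hA x y z)
    rw [iact, h6, h6, h6, h6, hA' (i z), act_eq_iff] at h
    rw [← inv3 z y x, h]
  have G : ∀ x y d, A x y ((x * y) * d) = A x y d := by
    intro x y d
    have h := hA x y d
    have e : A (i y) (i x) ((x * y) * d) = A x y d := by
      have k := hA (i y) (i x) ((x * y) * d)
      rw [← h6, h3] at k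
      nth_rewrite 2 [hA x y d] at k
      rw [mul_act, mul_act, h3, h3, act_act] at k
      exact add_zero_imp (act_inj' k.symm)
    have k : ∀ w, A (i y) (i x) w = A x y w := by
      intro w
      rw [rev x y w, cyc' w, ← inv3 y x (i w), h7]
    rw [← e, k]
  intro x u d
  have g := G (i x) (x * u) d
  rw [h3, lip, lip] at g
  rw [← g, rev, E, rev]

end helpers

end MoufangLoop

open MoufangLoop in
/-- STATEMENT 17: in a Moufang loop in which every associator squares to `1` and all
commutators and associators are central, `[x·y, z] = ([x,z]·[y,z])·(x,y,z)`. -/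
theorem comm_mul {L : Type*} [MoufangLoop L]
    (hsq : ∀ x y z : L, assoc x y z * assoc x y z = 1)
    (hcomm : ∀ a b : L, IsCentral (comm a b))
    (hassoc : ∀ a b c : L, IsCentral (assoc a b c)) :
    ∀ x y z : L, comm (x * y) z = (comm x z * comm y z) * assoc x y z := by
  intro x y z
  obtain ⟨A, hA⟩ : ∃ A : L → L → L → NN L, ∀ a b c, (A a b c).1 = assoc a b c :=
    ⟨fun a b c => ⟨assoc a b c, hsq a b c, (hassoc a b c).isC⟩, fun _ _ _ => rfl⟩
  have hA1 : ∀ a b c, (a * b) * c = act (A a b c) (a * (b * c)) := by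
    intro a b c
    rw [← assoc_spec a b c, ← hA, act, ((A a b c).2.2 _ 1).1]
  have hA' : ∀ a b c, a * (b * c) = act (A a b c) ((a * b) * c) := by
    intro a b c
    rw [hA1, act_act, two, act_zero]
  have hc : ∀ a b : L, a * b = comm a b * (b * a) := by
    intro a b
    rw [← comm_spec a b, (hcomm a b).1]
  have hC : ∀ a b : L, IsC (comm a b) := fun a b => (hcomm a b).isC
  have sym := assoc_symm A hA1 (fun a b => ⟨comm a b, hC a b, hc a b⟩)
  apply cancelR (a := z * (x * y))
  rw [← hc, ← hA]
  rw [hA1, hc y z, (hC y z x (z * y)).2.2, hA' x z y, hc x z, (hC x z (z * x) y).2.1, hA1 z x y,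
    mul_act, mul_act, mul_act, act_act, act_act, sym z x y, add_assoc, two, add_zero]
  change (A x y z).1 * _ = _
  rw [← (hC y z (comm x z) (z * (x * y))).2.1, ← ((A x y z).2.2 _ _).2.1,
    ((A x y z).2.2 (comm y z * comm x z) 1).1, (hC y z (comm x z) 1).1]
end

section
/- Let L be a Moufang loop in which every commutator [a,b] and every associator (a,b,c) is central. Then for all w, x, y, z ∈ L: (w·x, y, z) = (w,y,z)·(x,y,z). -/
namespace MoufangLoop

section Abstract

variable {A Z : Type*} [AddCommGroup A] [AddCommGroup Z]

/-- A normalized 3-cocycle on an abelian group satisfying the Moufang condition is additive. -/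
theorem cocycle_additive (f : A → A → A → Z)
    (f1 : ∀ b c, f 0 b c = 0) (f2 : ∀ a c, f a 0 c = 0) (f3 : ∀ a b, f a b 0 = 0)
    (C : ∀ w x y z, f (w + x) y z + f w x (y + z) = f w x y + f w (x + y) z + f x y z)
    (M : ∀ x y z, f x y (x + z) + f (x + y) x z = 0) :
    ∀ w x y z, f (w + x) y z = f w y z + f x y z := by
  -- inverse properties
  have flex : ∀ a b, f a b a = 0 := by
    intro a b
    have := M a b 0
    simpa [f3] using this
  have T : ∀ a b c, f a (a + b) c = - f b a c := by
    intro a b c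
    have h1 := C a b a c
    have h2 := M a b c
    rw [add_comm b a, flex, zero_add] at h1
    rw [add_comm] at h2
    rw [h2] at h1
    exact eq_neg_of_add_eq_zero_left h1.symm
  have li : ∀ a c, f (-a) a c = 0 := by
    intro a c
    have := T a (-a) c
    simp only [add_neg_cancel, f2] at this
    exact neg_eq_zero.mp this.symm
  have li2 : ∀ a c, f a (-a) c = 0 := by
    intro a c
    simpa using li (-a) c
  have ri : ∀ a b, f a b (-b) = 0 := by
    intro a b
    have := M b (a - b) (-b)
    simpa [f3] using this
  have R1 : ∀ a b c, f (-a) (a + b) c = - f a b c := by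
    intro a b c
    have := C (-a) a b c
    simp only [neg_add_cancel, f1, li, zero_add] at this
    exact eq_neg_of_add_eq_zero_left this.symm
  have R3 : ∀ a b c, f a (b + c) (-c) = - f a b c := by
    intro a b c
    have := C a b c (-c)
    simp only [add_neg_cancel, f3, ri, zero_add, add_zero] at this
    exact eq_neg_of_add_eq_zero_right this.symm
  have R2 : ∀ a b c, f (a + b) (-b) (b + c) = - f a b c := by
    intro a b c
    have := C a b (-b) (b + c)
    simp only [add_neg_cancel, f2, ri, li2, zero_add, add_zero, neg_add_cancel_left] at this
    exact eq_neg_of_add_eq_zero_left this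
  -- the function of points
  obtain ⟨G, hG⟩ : ∃ G : A → A → A → Z, ∀ p q r, G p q r = f p (q - p) (r - q) :=
    ⟨fun p q r => f p (q - p) (r - q), fun _ _ _ => rfl⟩
  have fG : ∀ a b c, f a b c = G a (a + b) (a + b + c) := by
    intro a b c
    rw [hG]; congr 1 <;> abel
  have s12 : ∀ p q r, G q p r = - G p q r := by
    intro p q r
    rw [hG, hG, ← R2]; congr 1 <;> abel
  have s23 : ∀ p q r, G p r q = - G p q r := by
    intro p q r
    rw [hG, hG, ← R3]; congr 1 <;> abel
  have t1 : ∀ p q r, G (p + q) q r = G p q r := by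
    intro p q r
    have h1 : G q (p + q) r = f (p + (q - p)) p (r - q - p) := by
      rw [hG]; congr 1 <;> abel
    have h2 := M p (q - p) (r - q - p)
    rw [show p + (r - q - p) = r - q by abel, ← h1, ← hG, s12 (p + q) q r] at h2
    exact (add_neg_eq_zero.mp h2).symm
  have t2 : ∀ p q r, G p (q + p) r = G p q r := by
    intro p q r
    rw [s12, t1, ← s12]
  have t2' : ∀ p q r, G p (r + q) q = G p r q := by
    intro p q r
    have e1 := t1 r q p
    rw [s23, s12, s23 r p q, s12 p r q, neg_neg, neg_neg] at e1
    exact e1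
  have t3 : ∀ p q r, G p q (r + q) = G p q r := by
    intro p q r
    rw [s23, t2', ← s23]
  have fGG : ∀ a b c, f a b c = G a b c := by
    intro a b c
    rw [fG, show a + b + c = c + (a + b) by abel, t3, add_comm a b, t2]
  have a12 : ∀ p q r, f q p r = - f p q r := by
    intro p q r; rw [fGG, fGG, s12]
  have a23 : ∀ p q r, f p r q = - f p q r := by
    intro p q r; rw [fGG, fGG, s23]
  have u1 : ∀ p q r, f (p + q) q r = f p q r := by
    intro p q r; rw [fGG, fGG, t1]
  have u2 : ∀ p q r, f p (q + p) r = f p q r := by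
    intro p q r; rw [fGG, fGG, t2]
  have n1 : ∀ p q r, f (-p) q r = - f p q r := by
    intro p q r
    rw [← R1, ← u2 (-p) (p + q)]; congr 1; abel
  have n2 : ∀ p q r, f p (-q) r = - f p q r := by
    intro p q r
    rw [a12, n1, a12 p q r, neg_neg]
  clear R1 R2 R3 T li li2 ri flex t1 t2 t3 s12 s23 fG fGG hG M f1 f2 f3
  -- the defect
  obtain ⟨g, hg⟩ : ∃ g : A → A → A → A → Z, ∀ w x y z,
      g w x y z = f (w + x) y z - f w y z - f x y z := ⟨_, fun _ _ _ _ => rfl⟩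
  have gs : ∀ w x y z, g x w y z = g w x y z := by
    intro w x y z; rw [hg, hg, add_comm x w]; abel
  have gk : ∀ w x y z, g w x z y = - g w x y z := by
    intro w x y z; rw [hg, hg, a23 _ y z, a23 _ y z, a23 _ y z]; abel
  have gn : ∀ w x y z, g w x y (-z) = - g w x y z := by
    intro w x y z
    have n3 : ∀ p q r, f p q (-r) = - f p q r := by
      intro p q r; rw [a23, n2, a23 p q r, neg_neg]
    rw [hg, hg, n3, n3, n3]; abel
  have cyc3 : ∀ p q r, f q r p = f p q r := by
    intro p q r; rw [a23, a12, neg_neg]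
  have K : ∀ w x y z, g y z w x = f (w + y) (x + y) z - f w x z - f w y z - f y x z := by
    intro w x y z
    have h := C (w - x) x y z
    have e1 := u1 (w - x) x (y + z)
    have e2 := u1 (w - x) x y
    have e3 := u1 (w - x) (x + y) z
    rw [sub_add_cancel] at h e1 e2
    rw [show w - x + (x + y) = w + y by abel] at e3
    rw [← e1, ← e2, ← e3] at h
    have e4 := cyc3 (y + z) w x
    have e5 := cyc3 y w x
    have e6 := cyc3 z w x
    have e7 := a12 x y z
    rw [hg, ← e4, ← e5, ← e6, e7]
    have h' : f w x (y + z) = f w x y + f (w + y) (x + y) z + f x y z - f w y z := by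
      rw [← h]; abel
    rw [h']; abel
  have key : ∀ w x y z, g w z x y = - g y z w x := by
    intro w x y z
    rw [← gn, K, K]
    have e1 : f (w + y) (-x + y) z = f (x + w) (y + w) z := by
      have e := u2 (w + y) (-(x + w)) z
      rw [show -(x + w) + (w + y) = -x + y by abel, n2] at e
      rw [e, a12 (x + w), add_comm y w, neg_neg]
    rw [e1, n2, n2, a12 x w z, a12 x y z]
    abel
  have two : ∀ w x y z, g w z x y = - g w z x y := by
    intro w x y z
    have h1 := key w x y z
    have h2 := key y w x z
    have h3 := key x y w z
    rw [h2, h3] at h1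
    simpa using h1
  have cy : ∀ w x y z, g w x y z + g x y w z + g y z w x = 0 := by
    intro w x y z
    have h := C w x y z
    have e1 := hg w x y z
    have e2 := hg x y w z
    have e3 := hg y z w x
    rw [a12 w (x + y) z, a12 w x z, a12 w y z] at e2
    rw [← cyc3 (y+z) w x, ← cyc3 y w x, ← cyc3 z w x] at e3
    have h' : f (w + x) y z = f w x y + f w (x + y) z + f x y z - f w x (y + z) := by
      rw [← h]; abel
    rw [e1, e2, e3, h']; abel
  have gz : ∀ w x y z, g w x y z = 0 := by
    intro w x y z
    have h := cy w x y z
    have key' : ∀ w x y z, g w z x y = g y z w x := by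
      intro w x y z; rw [key, ← two]
    have gk' : ∀ w x y z, g w x z y = g w x y z := by
      intro w x y z; rw [gk, ← two]
    have p1 : g x y w z = g w x y z := by
      rw [gs y x, key' y w z x, key' z y w x, gk']
    have p2 : g y z w x = g w x y z := by
      rw [← key' w x y z, gs z w, key' z x y w, gs w y, key' w z x y, p1]
    rw [p1, p2] at h
    have t := two w y z x
    have : g w x y z + g w x y z = 0 := by
      nth_rewrite 1 [t]; abel
    rw [this, zero_add] at h
    exact h
  intro w x y z
  have := hg w x y z
  rw [gz] at this
  have h2 : f (w + x) y z = (f (w + x) y z - f w y z - f x y z) + (f w y z + f x y z) := by abel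
  rw [h2, ← this, zero_add]

end Abstract

section Loop

variable {L : Type*} [MoufangLoop L]

theorem mul_left_cancel' {a b c : L} (h : a * b = a * c) : b = c :=
  (existsUnique_mul_left a (a * c)).unique h rfl

theorem assoc_eq {a b c k : L} (h : (a * (b * c)) * k = (a * b) * c) : assoc a b c = k :=
  mul_left_cancel' ((assoc_spec a b c).trans h.symm)

theorem assoc_eq_one {a b c : L} : assoc a b c = 1 ↔ (a * b) * c = a * (b * c) := by
  constructor
  · intro h
    have := assoc_spec a b c
    rw [h, MoufangLoop.mul_one] at this
    exact this.symm
  · intro h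
    apply assoc_eq
    rw [MoufangLoop.mul_one, h]

theorem IsCentral.comm' {z : L} (h : IsCentral z) (x : L) : z * x = x * z := h.1 x

theorem IsCentral.r {z : L} (h : IsCentral z) (x y : L) : x * (y * z) = (x * y) * z :=
  (assoc_eq_one.1 (h.2 x y).2.2).symm

theorem IsCentral.m {z : L} (h : IsCentral z) (x y : L) : (x * z) * y = (x * y) * z := by
  rw [assoc_eq_one.1 (h.2 x y).2.1, h.1, h.r]

theorem isCentral_of {z : L} (h : ∀ x, z * x = x * z)
    (hr : ∀ x y : L, x * (y * z) = (x * y) * z) (hm : ∀ x y : L, (x * z) * y = (x * y) * z) :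
    IsCentral z := by
  refine ⟨h, fun x y => ⟨?_, ?_, ?_⟩⟩ <;> rw [assoc_eq_one]
  · rw [h, h, hm]
  · rw [hm, h, hr]
  · rw [hr]

theorem isCentral_one : IsCentral (1 : L) := by
  apply isCentral_of <;> intros <;> simp [MoufangLoop.one_mul, MoufangLoop.mul_one]

theorem IsCentral.mul {u v : L} (hu : IsCentral u) (hv : IsCentral v) : IsCentral (u * v) := by
  apply isCentral_of
  · intro x
    rw [hv.m, hu.comm', ← hv.r]
  · intro x y
    rw [hv.r, hv.r, hu.r, ← hv.r]
  · intro x y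
    rw [hv.r, hv.m, hu.m, ← hv.r]

theorem mul_right_cancel_central {u a b : L} (hu : IsCentral u) (h : a * u = b * u) : a = b := by
  rw [← hu.comm', ← hu.comm'] at h
  exact mul_left_cancel' h

theorem IsCentral.exists_inv {u : L} (hu : IsCentral u) : ∃ v : L, IsCentral v ∧ v * u = 1 := by
  obtain ⟨v, hv, -⟩ := existsUnique_mul_left u 1
  have hv' : v * u = 1 := by rw [← hu.comm', hv]
  refine ⟨v, ?_, hv'⟩
  apply isCentral_of
  · intro x
    apply mul_right_cancel_central hu
    rw [← hu.m, hv', ← hu.r, hv', MoufangLoop.one_mul, MoufangLoop.mul_one]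
  · intro x y
    apply mul_right_cancel_central hu
    rw [← hu.r, ← hu.r, ← hu.r, hv', MoufangLoop.mul_one, MoufangLoop.mul_one]
  · intro x y
    apply mul_right_cancel_central hu
    rw [← hu.m, ← hu.r, ← hu.r, hv', MoufangLoop.mul_one, MoufangLoop.mul_one]

variable (L) in
/-- The centre of the loop, as a type. -/
def Cen : Type _ := {z : L // IsCentral z}

noncomputable instance : AddCommGroup (Cen L) where
  add u v := ⟨u.1 * v.1, u.2.mul v.2⟩
  zero := ⟨1, isCentral_one⟩
  neg u := ⟨u.2.exists_inv.choose, u.2.exists_inv.choose_spec.1⟩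
  add_assoc u v w := Subtype.ext (w.2.r _ _).symm
  zero_add u := Subtype.ext (MoufangLoop.one_mul _)
  add_zero u := Subtype.ext (MoufangLoop.mul_one _)
  neg_add_cancel u := Subtype.ext u.2.exists_inv.choose_spec.2
  add_comm u v := Subtype.ext (u.2.comm' _)
  nsmul := @nsmulRec _ ⟨⟨1, isCentral_one⟩⟩ ⟨fun u v => ⟨u.1 * v.1, u.2.mul v.2⟩⟩
  zsmul := @zsmulRec _ ⟨⟨1, isCentral_one⟩⟩ ⟨fun u v => ⟨u.1 * v.1, u.2.mul v.2⟩⟩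
    ⟨fun u => ⟨u.2.exists_inv.choose, u.2.exists_inv.choose_spec.1⟩⟩
    (@nsmulRec _ ⟨⟨1, isCentral_one⟩⟩ ⟨fun u v => ⟨u.1 * v.1, u.2.mul v.2⟩⟩)

theorem Cen.val_add (u v : Cen L) : (u + v).1 = u.1 * v.1 := rfl
theorem Cen.val_zero : (0 : Cen L).1 = 1 := rfl

variable (L) in
/-- Congruence modulo the centre. -/
def cenSetoid : Setoid L where
  r x y := ∃ u, IsCentral u ∧ x = y * u
  iseqv := by
    refine ⟨fun x => ⟨1, isCentral_one, (MoufangLoop.mul_one x).symm⟩, ?_, ?_⟩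
    · rintro x y ⟨u, hu, rfl⟩
      obtain ⟨v, hv, hvu⟩ := hu.exists_inv
      exact ⟨v, hv, by rw [← hv.r, hu.comm', hvu, MoufangLoop.mul_one]⟩
    · rintro x y z ⟨u, hu, rfl⟩ ⟨v, hv, rfl⟩
      exact ⟨v * u, hv.mul hu, (hu.r _ _).symm⟩

variable (L) in
/-- The quotient by the centre. -/
def Quo : Type _ := Quotient (cenSetoid L)

/-- Projection to the quotient. -/
def toQuo (x : L) : Quo L := Quotient.mk (cenSetoid L) x

theorem toQuo_eq {x y : L} : toQuo x = toQuo y ↔ ∃ u, IsCentral u ∧ x = y * u :=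
  Quotient.eq (r := cenSetoid L)

theorem toQuo_surj (a : Quo L) : ∃ x, toQuo x = a := Quotient.exists_rep a

/-- Addition on the quotient. -/
def quoAdd : Quo L → Quo L → Quo L :=
  Quotient.lift₂ (fun x y => toQuo (x * y)) (by
    rintro _ _ x y ⟨u, hu, rfl⟩ ⟨v, hv, rfl⟩
    exact toQuo_eq.2 ⟨u * v, hu.mul hv, by rw [hv.r, hu.m, hv.r]⟩)

theorem exists_left_inv (a : Quo L) : ∃ b : Quo L, quoAdd b a = toQuo 1 := by
  obtain ⟨x, rfl⟩ := toQuo_surj a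
  obtain ⟨y, hy, -⟩ := existsUnique_mul_right x 1
  exact ⟨toQuo y, congrArg toQuo hy⟩

/-- The quotient by the centre is an abelian group. -/
@[reducible] noncomputable def quoGroup (hcomm : ∀ a b : L, IsCentral (comm a b))
    (hassoc : ∀ a b c : L, IsCentral (assoc a b c)) : AddCommGroup (Quo L) where
  add := quoAdd
  zero := toQuo 1
  neg a := (exists_left_inv a).choose
  add_assoc a b c := by
    obtain ⟨x, rfl⟩ := toQuo_surj a
    obtain ⟨y, rfl⟩ := toQuo_surj b
    obtain ⟨z, rfl⟩ := toQuo_surj c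
    exact toQuo_eq.2 ⟨_, hassoc x y z, (assoc_spec x y z).symm⟩
  zero_add a := by
    obtain ⟨x, rfl⟩ := toQuo_surj a
    exact congrArg toQuo (MoufangLoop.one_mul x)
  add_zero a := by
    obtain ⟨x, rfl⟩ := toQuo_surj a
    exact congrArg toQuo (MoufangLoop.mul_one x)
  neg_add_cancel a := (exists_left_inv a).choose_spec
  add_comm a b := by
    obtain ⟨x, rfl⟩ := toQuo_surj a
    obtain ⟨y, rfl⟩ := toQuo_surj b
    exact toQuo_eq.2 ⟨_, hcomm x y, (comm_spec x y).symm⟩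
  nsmul := @nsmulRec _ ⟨toQuo 1⟩ ⟨quoAdd⟩
  zsmul := @zsmulRec _ ⟨toQuo 1⟩ ⟨quoAdd⟩ ⟨fun a => (exists_left_inv a).choose⟩
    (@nsmulRec _ ⟨toQuo 1⟩ ⟨quoAdd⟩)

theorem assoc_congr {x y z u v w : L} (hu : IsCentral u) (hv : IsCentral v) (hw : IsCentral w) :
    assoc (x * u) (y * v) (z * w) = assoc x y z := by
  have c1 : ∀ x y z : L, assoc (x * u) y z = assoc x y z := by
    intro x y z
    apply assoc_eq
    rw [hu.m x (y * z), hu.m, assoc_spec, hu.m x y, hu.m]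
  have c2 : ∀ x y z : L, assoc x (y * v) z = assoc x y z := by
    intro x y z
    apply assoc_eq
    rw [hv.m y z, hv.r x (y * z), hv.m, assoc_spec, hv.r x y, hv.m]
  have c3 : ∀ x y z : L, assoc x y (z * w) = assoc x y z := by
    intro x y z
    apply assoc_eq
    rw [hw.r y z, hw.r x (y * z), hw.m, assoc_spec, hw.r]
  rw [c1, c2, c3]

theorem assoc_cocycle (hassoc : ∀ a b c : L, IsCentral (assoc a b c)) (w x y z : L) :
    assoc (w * x) y z * assoc w x (y * z)
      = assoc w x y * assoc w (x * y) z * assoc x y z := by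
  have h1 : (w * (x * (y * z))) * (assoc (w * x) y z * assoc w x (y * z))
      = ((w * x) * y) * z := by
    rw [(hassoc (w * x) y z).comm', (hassoc (w * x) y z).r, assoc_spec, assoc_spec]
  have h2 : (w * (x * (y * z))) * (assoc w x y * assoc w (x * y) z * assoc x y z)
      = ((w * x) * y) * z := by
    rw [(hassoc x y z).r, (hassoc w (x * y) z).r, ← (hassoc x y z).m, ← (hassoc x y z).m,
      ← (hassoc x y z).r, assoc_spec, (hassoc w x y).m, assoc_spec, ← (hassoc w x y).m, assoc_spec]
  exact mul_left_cancel' (h1.trans h2.symm)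

theorem assoc_moufang (hassoc : ∀ a b c : L, IsCentral (assoc a b c)) (x y z : L) :
    assoc x y (x * z) * assoc (x * y) x z = 1 := by
  apply mul_left_cancel' (a := x * (y * (x * z)))
  rw [(hassoc (x * y) x z).r, assoc_spec, assoc_spec, MoufangLoop.mul_one, moufang]

end Loop

end MoufangLoop

open MoufangLoop in
/-- STATEMENT 18: in a Moufang loop in which all commutators and associators are central,
`(w·x, y, z) = (w,y,z)·(x,y,z)`. -/
theorem assoc_mul {L : Type*} [MoufangLoop L]
    (hcomm : ∀ a b : L, IsCentral (comm a b))
    (hassoc : ∀ a b c : L, IsCentral (assoc a b c)) :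
    ∀ w x y z : L, assoc (w * x) y z = assoc w y z * assoc x y z := by
  let _ := quoGroup hcomm hassoc
  have hadd : ∀ x y : L, toQuo x + toQuo y = toQuo (x * y) := fun _ _ => rfl
  have h0 : (0 : Quo L) = toQuo 1 := rfl
  obtain ⟨f, hf⟩ : ∃ f : Quo L → Quo L → Quo L → Cen L,
      ∀ x y z : L, f (toQuo x) (toQuo y) (toQuo z) = ⟨assoc x y z, hassoc x y z⟩ := by
    choose s hs using (toQuo_surj (L := L))
    refine ⟨fun a b c => ⟨assoc (s a) (s b) (s c), hassoc _ _ _⟩, fun x y z => Subtype.ext ?_⟩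
    obtain ⟨u, hu, eu⟩ := toQuo_eq.1 (hs (toQuo x))
    obtain ⟨v, hv, ev⟩ := toQuo_eq.1 (hs (toQuo y))
    obtain ⟨w, hw, ew⟩ := toQuo_eq.1 (hs (toQuo z))
    show assoc (s (toQuo x)) (s (toQuo y)) (s (toQuo z)) = assoc x y z
    rw [eu, ev, ew, assoc_congr hu hv hw]
  have main := cocycle_additive f
    (by
      intro b c
      obtain ⟨y, rfl⟩ := toQuo_surj b
      obtain ⟨z, rfl⟩ := toQuo_surj c
      rw [h0, hf]
      exact Subtype.ext (isCentral_one.2 y z).1)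
    (by
      intro b c
      obtain ⟨y, rfl⟩ := toQuo_surj b
      obtain ⟨z, rfl⟩ := toQuo_surj c
      rw [h0, hf]
      exact Subtype.ext (isCentral_one.2 y z).2.1)
    (by
      intro b c
      obtain ⟨y, rfl⟩ := toQuo_surj b
      obtain ⟨z, rfl⟩ := toQuo_surj c
      rw [h0, hf]
      exact Subtype.ext (isCentral_one.2 y z).2.2)
    (by
      intro a b c d
      obtain ⟨w, rfl⟩ := toQuo_surj a
      obtain ⟨x, rfl⟩ := toQuo_surj b
      obtain ⟨y, rfl⟩ := toQuo_surj c
      obtain ⟨z, rfl⟩ := toQuo_surj d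
      simp only [hadd, hf]
      exact Subtype.ext (assoc_cocycle hassoc w x y z))
    (by
      intro a b c
      obtain ⟨x, rfl⟩ := toQuo_surj a
      obtain ⟨y, rfl⟩ := toQuo_surj b
      obtain ⟨z, rfl⟩ := toQuo_surj c
      simp only [hadd, hf]
      exact Subtype.ext (assoc_moufang hassoc x y z))
  intro w x y z
  have h := main (toQuo w) (toQuo x) (toQuo y) (toQuo z)
  simp only [hadd, hf] at h
  exact congrArg Subtype.val h
end
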